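/- arXiv:2310.05995 — 6 statements merged into one kernel-verified Lean document; each statement's English description precedes it below -/
import Mathlib

section
/- Let (n_p, n_r, ℓ_p, ℓ_r, S) be a paper assignment instance in which S is blockwise dominant with block identity A ∈ ℝ_{≥0}^{k×k} and block sizes (p_1,…,p_k), (r_1,…,r_k). Assume p_i·ℓ_p ≤ r_i·ℓ_r and Q·r_i ≥ ℓ_p for all i ∈ {1,…,k}. Let x* be the within-group uniform assignment, defined by x*_{p,r} = ℓ_p/r_i if paper p and reviewer r both belong to group i, and x*_{p,r} = 0 otherwise. Then x* ∈ F(Q), and for every feasible assignment x ∈ F(Q), Quality(x*) ≥ Quality(x); moreover, Quality(x) = Quality(x*) if and only if x_{p,r} > 0 only when paper p and reviewer r belong to the same group. -/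
open Finset

noncomputable section

/-- The feasible set `F(Q)` of randomized assignments. -/
def Feasible (np nr lp lr : ℕ) (Q : ℝ) (x : Fin np → Fin nr → ℝ) : Prop :=
  (∀ p, ∑ r, x p r = (lp : ℝ)) ∧ (∀ r, ∑ p, x p r ≤ (lr : ℝ)) ∧
    ∀ p r, 0 ≤ x p r ∧ x p r ≤ Q

/-- `Quality(x) = Σ_{p,r} x_{p,r} S_{p,r}`. -/
def Quality {np nr : ℕ} (S x : Fin np → Fin nr → ℝ) : ℝ :=
  ∑ p, ∑ r, x p r * S p r

/-- `PQuality_f(x) = Σ_{p,r} S_{p,r} f(x_{p,r})`. -/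
def PQuality {np nr : ℕ} (f : ℝ → ℝ) (S x : Fin np → Fin nr → ℝ) : ℝ :=
  ∑ p, ∑ r, S p r * f (x p r)

/-- `PLRA(Q)`: the set of maximizers of `Quality` over `F(Q)`. -/
def PLRA (np nr lp lr : ℕ) (Q : ℝ) (S : Fin np → Fin nr → ℝ) :
    Set (Fin np → Fin nr → ℝ) :=
  {x | Feasible np nr lp lr Q x ∧
    ∀ y, Feasible np nr lp lr Q y → Quality S y ≤ Quality S x}

/-- `PM(Q,f)`: the set of maximizers of `PQuality_f` over `F(Q)`. -/
def PM (np nr lp lr : ℕ) (Q : ℝ) (f : ℝ → ℝ) (S : Fin np → Fin nr → ℝ) :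
    Set (Fin np → Fin nr → ℝ) :=
  {x | Feasible np nr lp lr Q x ∧
    ∀ y, Feasible np nr lp lr Q y → PQuality f S y ≤ PQuality f S x}

/-- `Maxprob(x) = max_{p,r} x_{p,r}`. -/
def Maxprob {np nr : ℕ} (x : Fin np → Fin nr → ℝ) : ℝ := ⨆ p, ⨆ r, x p r

/-- `AvgMaxp(x) = (1/n_p) Σ_p max_r x_{p,r}`. -/
def AvgMaxp {np nr : ℕ} (x : Fin np → Fin nr → ℝ) : ℝ := (∑ p, ⨆ r, x p r) / np

/-- `Support(x) = #{(p,r) : x_{p,r} > 0}`. -/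
def SupportSize {np nr : ℕ} (x : Fin np → Fin nr → ℝ) : ℕ :=
  {pr : Fin np × Fin nr | 0 < x pr.1 pr.2}.ncard

/-- `Entropy(x) = -Σ_{p,r} x_{p,r} ln x_{p,r}` (with `Real.log 0 = 0`). -/
def Entropy {np nr : ℕ} (x : Fin np → Fin nr → ℝ) : ℝ :=
  -∑ p, ∑ r, x p r * Real.log (x p r)

/-- `L2Norm(x) = sqrt(Σ_{p,r} x_{p,r}²)`. -/
def L2Norm {np nr : ℕ} (x : Fin np → Fin nr → ℝ) : ℝ :=
  Real.sqrt (∑ p, ∑ r, (x p r) ^ 2)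

/-- A perturbation function: `f : [0,1] → [0,1]`, `f 0 = 0`, nondecreasing and concave
on `[0,1]` (differentiability is recorded separately via `HasDerivWithinAt`). -/
def IsPerturbation (f : ℝ → ℝ) : Prop :=
  f 0 = 0 ∧ (∀ t ∈ Set.Icc (0 : ℝ) 1, f t ∈ Set.Icc (0 : ℝ) 1) ∧
    MonotoneOn f (Set.Icc (0 : ℝ) 1) ∧ ConcaveOn ℝ (Set.Icc (0 : ℝ) 1) f

/-- `Dom(A) = sup {α : A i i ≥ α · A i j for all i ≠ j}`. -/
def DomA {k : ℕ} (A : Fin k → Fin k → ℝ) : ℝ :=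
  sSup {α : ℝ | ∀ i j, i ≠ j → α * A i j ≤ A i i}

/-!
Every row of a feasible `x` is a nonnegative weight vector of total mass `lp`, so paper `p`
contributes at most `lp * w p`, where `w p` bounds its similarities, and exactly that much iff its
weight sits on reviewers attaining `w p`. Blockwise dominance says that, for `w p` the similarity
of `p` to its own group, these are precisely the reviewers of that group; `x*` puts all its mass
there, so it attains every row bound at once.
-/

section WeightedSum

variable {ι R : Type*} [Semiring R] [PartialOrder R] {s : Finset ι} {x f : ι → R} {M : R}

theorem sum_mul_le_sum_mul_of_le [IsOrderedRing R] (hx : ∀ i ∈ s, 0 ≤ x i)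
    (hf : ∀ i ∈ s, f i ≤ M) : ∑ i ∈ s, x i * f i ≤ (∑ i ∈ s, x i) * M := by
  rw [sum_mul]
  exact sum_le_sum fun i hi => mul_le_mul_of_nonneg_left (hf i hi) (hx i hi)

theorem sum_mul_eq_sum_mul_iff_of_le [IsStrictOrderedRing R] (hx : ∀ i ∈ s, 0 ≤ x i)
    (hf : ∀ i ∈ s, f i ≤ M) :
    ∑ i ∈ s, x i * f i = (∑ i ∈ s, x i) * M ↔ ∀ i ∈ s, 0 < x i → f i = M := by
  rw [sum_mul, sum_eq_sum_iff_of_le fun i hi => mul_le_mul_of_nonneg_left (hf i hi) (hx i hi)]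
  refine forall₂_congr fun i hi => ⟨fun h hpos => ?_, fun h => ?_⟩
  · by_contra hne
    exact (mul_lt_mul_of_pos_left ((hf i hi).lt_of_ne hne) hpos).ne h
  · rcases (hx i hi).eq_or_lt with hzero | hpos
    · rw [← hzero, zero_mul, zero_mul]
    · rw [h hpos]

end WeightedSum

namespace Feasible

variable {np nr lp lr : ℕ} {Q : ℝ} {S x : Fin np → Fin nr → ℝ} {w : Fin np → ℝ}

theorem row_quality_le (hx : Feasible np nr lp lr Q x) {p : Fin np} {M : ℝ}
    (hS : ∀ r, S p r ≤ M) : ∑ r, x p r * S p r ≤ lp * M := by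
  rw [← hx.1 p]
  exact sum_mul_le_sum_mul_of_le (fun r _ => (hx.2.2 p r).1) fun r _ => hS r

theorem row_quality_eq_iff (hx : Feasible np nr lp lr Q x) {p : Fin np} {M : ℝ}
    (hS : ∀ r, S p r ≤ M) : ∑ r, x p r * S p r = lp * M ↔ ∀ r, 0 < x p r → S p r = M := by
  rw [← hx.1 p, sum_mul_eq_sum_mul_iff_of_le (fun r _ => (hx.2.2 p r).1) fun r _ => hS r]
  simp only [mem_univ, true_imp_iff]

theorem quality_le (hx : Feasible np nr lp lr Q x) (hS : ∀ p r, S p r ≤ w p) :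
    Quality S x ≤ ∑ p, lp * w p :=
  sum_le_sum fun p _ => hx.row_quality_le (hS p)

theorem quality_eq_iff (hx : Feasible np nr lp lr Q x) (hS : ∀ p r, S p r ≤ w p) :
    Quality S x = ∑ p, lp * w p ↔ ∀ p r, 0 < x p r → S p r = w p := by
  rw [Quality, sum_eq_sum_iff_of_le fun p _ => hx.row_quality_le (hS p)]
  simp only [mem_univ, true_imp_iff, hx.row_quality_eq_iff (hS _)]

end Feasible

theorem sum_ite_const_eq_ncard_mul {ι R : Type*} [Fintype ι] [NonAssocSemiring R] (P : ι → Prop)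
    [DecidablePred P] (a : R) : ∑ i, (if P i then a else 0) = {i | P i}.ncard * a := by
  rw [← sum_filter, sum_const, nsmul_eq_mul, Set.ncard_eq_toFinset_card', Set.toFinset_ofPred]

/-- The within-group uniform assignment `x*`: the load `l` of each paper `p` is spread evenly over
the reviewers of its group, where `pg` and `rg` send papers and reviewers to their groups. If the
group of `p` has no reviewer, or infinitely many, then the whole row of `p` is zero. -/
def withinGroupUniform {P R κ : Type*} [DecidableEq κ] (l : ℝ) (pg : P → κ) (rg : R → κ) :
    P → R → ℝ :=
  fun p r => if pg p = rg r then l / {r' | rg r' = pg p}.ncard else 0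

section WithinGroupUniform

variable {P R κ : Type*} [DecidableEq κ] {l Q : ℝ} {pg : P → κ} {rg : R → κ}

theorem group_eq_of_withinGroupUniform_ne_zero {p : P} {r : R}
    (h : withinGroupUniform l pg rg p r ≠ 0) : pg p = rg r :=
  by_contra fun hne => h (if_neg hne)

theorem sum_withinGroupUniform_left [Fintype R] {p : P}
    (hl : {r | rg r = pg p}.ncard = 0 → l = 0) : ∑ r, withinGroupUniform l pg rg p r = l := by
  simp only [withinGroupUniform, eq_comm (a := pg p)]
  rw [sum_ite_const_eq_ncard_mul]
  exact mul_div_cancel_of_imp' fun h => hl (by exact_mod_cast h)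

theorem sum_withinGroupUniform_right [Fintype P] (r : R) :
    ∑ p, withinGroupUniform l pg rg p r =
      {p | pg p = rg r}.ncard * (l / {r' | rg r' = rg r}.ncard) := by
  rw [← sum_ite_const_eq_ncard_mul]
  refine sum_congr rfl fun p _ => ?_
  unfold withinGroupUniform
  split_ifs with h
  · rw [h]
  · rfl

theorem withinGroupUniform_nonneg (hl : 0 ≤ l) (p : P) (r : R) :
    0 ≤ withinGroupUniform l pg rg p r := by
  unfold withinGroupUniform
  positivity

theorem withinGroupUniform_le (hQ : 0 ≤ Q) {p : P}
    (hl : l ≤ Q * {r | rg r = pg p}.ncard) (r : R) : withinGroupUniform l pg rg p r ≤ Q := by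
  unfold withinGroupUniform
  split_ifs
  · exact div_le_of_le_mul₀ (Nat.cast_nonneg _) hQ hl
  · exact hQ

end WithinGroupUniform

section BlockAssignment

variable {κ : Type*} [DecidableEq κ] {np nr lp lr : ℕ} {Q : ℝ} {pg : Fin np → κ} {rg : Fin nr → κ}

theorem feasible_withinGroupUniform (hQ : 0 ≤ Q)
    (hload : ∀ r, {p | pg p = rg r}.ncard * lp ≤ {r' | rg r' = rg r}.ncard * lr)
    (hQr : ∀ p, (lp : ℝ) ≤ Q * {r | rg r = pg p}.ncard) :
    Feasible np nr lp lr Q (withinGroupUniform lp pg rg) := by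
  refine ⟨fun p => ?_, fun r => ?_, fun p r =>
    ⟨withinGroupUniform_nonneg (Nat.cast_nonneg _) p r, withinGroupUniform_le hQ (hQr p) r⟩⟩
  · refine sum_withinGroupUniform_left fun hempty => ?_
    have hle := hQr p
    rw [hempty, Nat.cast_zero, mul_zero] at hle
    exact hle.antisymm (Nat.cast_nonneg _)
  · have hpos : 0 < {r' | rg r' = rg r}.ncard := (Set.ncard_pos).2 ⟨r, rfl⟩
    rw [sum_withinGroupUniform_right, ← mul_div_assoc, div_le_iff₀' (Nat.cast_pos.2 hpos)]
    exact_mod_cast hload r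

theorem stmt2_general {S : Fin np → Fin nr → ℝ} {w : Fin np → ℝ} (hQ : 0 ≤ Q)
    (hS_eq : ∀ p r, pg p = rg r → S p r = w p)
    (hS_lt : ∀ p r, pg p ≠ rg r → S p r < w p)
    (hload : ∀ r, {p | pg p = rg r}.ncard * lp ≤ {r' | rg r' = rg r}.ncard * lr)
    (hQr : ∀ p, (lp : ℝ) ≤ Q * {r | rg r = pg p}.ncard) :
    Feasible np nr lp lr Q (withinGroupUniform lp pg rg) ∧
    (∀ x, Feasible np nr lp lr Q x → Quality S x ≤ Quality S (withinGroupUniform lp pg rg)) ∧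
    (∀ x, Feasible np nr lp lr Q x →
      (Quality S x = Quality S (withinGroupUniform lp pg rg) ↔
        ∀ p r, 0 < x p r → pg p = rg r)) := by
  have hS_le (p r) : S p r ≤ w p :=
    (eq_or_ne (pg p) (rg r)).elim (fun h => (hS_eq p r h).le) fun h => (hS_lt p r h).le
  have hS_eq_iff (p r) : S p r = w p ↔ pg p = rg r :=
    ⟨fun h => by_contra fun hne => (hS_lt p r hne).ne h, hS_eq p r⟩
  have hfeas := feasible_withinGroupUniform hQ hload hQr
  have hvalue : Quality S (withinGroupUniform lp pg rg) = ∑ p, lp * w p :=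
    (hfeas.quality_eq_iff hS_le).2 fun p r h =>
      hS_eq p r (group_eq_of_withinGroupUniform_ne_zero h.ne')
  simp only [hvalue]
  refine ⟨hfeas, fun x hx => hx.quality_le hS_le, fun x hx => ?_⟩
  simp only [hx.quality_eq_iff hS_le, hS_eq_iff]

end BlockAssignment

/-- the within-group uniform assignment `x*` is feasible and maximizes
quality; a feasible assignment attains the same quality iff it only assigns
within groups. -/
theorem stmt2 (np nr k lp lr : ℕ) (Q : ℝ) (hQ : Q ∈ Set.Icc (0 : ℝ) 1)
    (S : Fin np → Fin nr → ℝ) (A : Fin k → Fin k → ℝ)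
    (pg : Fin np → Fin k) (rg : Fin nr → Fin k)
    (hA0 : ∀ i j, 0 ≤ A i j)
    (hSA : ∀ p r, S p r = A (pg p) (rg r))
    (hdiag : ∀ i j, i ≠ j → A i j < A i i)
    (hload : ∀ i : Fin k,
      {p : Fin np | pg p = i}.ncard * lp ≤ {r : Fin nr | rg r = i}.ncard * lr)
    (hQr : ∀ i : Fin k, (lp : ℝ) ≤ Q * {r : Fin nr | rg r = i}.ncard)
    (xstar : Fin np → Fin nr → ℝ)
    (hxstar : ∀ p r, xstar p r =
      if pg p = rg r then (lp : ℝ) / {r' : Fin nr | rg r' = pg p}.ncard else 0) :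
    Feasible np nr lp lr Q xstar ∧
    (∀ x, Feasible np nr lp lr Q x → Quality S x ≤ Quality S xstar) ∧
    (∀ x, Feasible np nr lp lr Q x →
      (Quality S x = Quality S xstar ↔ ∀ p r, 0 < x p r → pg p = rg r)) := by
  obtain rfl : xstar = withinGroupUniform lp pg rg := funext₂ hxstar
  exact stmt2_general (w := fun p => A (pg p) (pg p)) hQ.1 (fun p r h => by rw [hSA, h])
    (fun p r h => by simpa only [hSA] using hdiag _ _ h) (fun r => hload (rg r))
    (fun p => hQr (pg p))
end
end

section
/- Let (n_p, n_r, ℓ_p, ℓ_r, S) be a paper assignment instance in which S is blockwise dominant with block identity A ∈ ℝ_{≥0}^{k×k} and block sizes (p_1,…,p_k), (r_1,…,r_k). Assume p_i·ℓ_p ≤ r_i·ℓ_r and Q·r_i ≥ ℓ_p for all i ∈ {1,…,k}. Then every x ∈ PLRA(Q) assigns paper p to reviewer r with positive probability only if p and r belong to the same group; that is, x_{p,r} > 0 implies that paper p and reviewer r are in the same group. -/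
open Finset

noncomputable section

/-!
A row of a feasible assignment has total weight `ℓ_p`, so if no similarity of paper `p` exceeds
`a p`, then no feasible assignment has quality above `ℓ_p ∑ p, a p`, and one that puts mass on a
pair with `S p r < a p` stays strictly below. For a blockwise dominant matrix take `a p` to be the
similarity of `p` to its own group. Spreading each paper uniformly over the reviewers of its own
group is feasible, by the hypotheses on loads and on `Q`, and attains the bound; hence every
maximizer is supported within the groups.
-/

section Quality

variable {np nr lp lr : ℕ} {Q : ℝ} {S T x y : Fin np → Fin nr → ℝ} {a : Fin np → ℝ}

theorem quality_lt_quality (hx : ∀ p r, 0 ≤ x p r) (hST : ∀ p r, S p r ≤ T p r)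
    {p : Fin np} {r : Fin nr} (hpos : 0 < x p r) (hlt : S p r < T p r) :
    Quality S x < Quality T x := by
  have hle : ∀ p r, x p r * S p r ≤ x p r * T p r := fun p r =>
    mul_le_mul_of_nonneg_left (hST p r) (hx p r)
  exact sum_lt_sum (fun p _ => sum_le_sum fun r _ => hle p r)
    ⟨p, mem_univ p, sum_lt_sum (fun r _ => hle p r)
      ⟨r, mem_univ r, mul_lt_mul_of_pos_left hlt hpos⟩⟩

theorem quality_congr_of_ne_zero (h : ∀ p r, x p r ≠ 0 → S p r = T p r) :
    Quality S x = Quality T x :=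
  sum_congr rfl fun p _ => sum_congr rfl fun r _ => mul_eq_mul_left_iff.mpr <|
    or_iff_not_imp_right.mpr (h p r)

theorem Feasible.quality_const_rows (hx : Feasible np nr lp lr Q x) :
    Quality (fun p _ => a p) x = ∑ p, lp * a p :=
  sum_congr rfl fun p _ => by rw [← sum_mul, hx.1 p]

theorem eq_of_mem_PLRA_of_pos (hx : x ∈ PLRA np nr lp lr Q S) (hS : ∀ p r, S p r ≤ a p)
    (hy : Feasible np nr lp lr Q y) (hyS : ∀ p r, y p r ≠ 0 → S p r = a p)
    {p : Fin np} {r : Fin nr} (hpos : 0 < x p r) : S p r = a p := by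
  obtain ⟨hxF, hmax⟩ := hx
  by_contra hne
  refine (hmax y hy).not_gt ?_
  calc Quality S x
      < Quality (fun p _ => a p) x :=
        quality_lt_quality (fun p r => (hxF.2.2 p r).1) hS hpos ((hS p r).lt_of_ne hne)
    _ = Quality (fun p _ => a p) y := by rw [hxF.quality_const_rows, hy.quality_const_rows]
    _ = Quality S y := (quality_congr_of_ne_zero hyS).symm

end Quality

theorem sum_indicator_const_eq_ncard_mul {α M : Type*} [Fintype α] [NonAssocSemiring M]
    (s : Set α) (c : M) : ∑ i, s.indicator (fun _ => c) i = s.ncard * c := by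
  classical
  rw [sum_indicator_eq_sum_filter, sum_const, nsmul_eq_mul, Set.ncard_eq_toFinset_card',
    Set.filter_mem_univ_eq_toFinset]

section GroupUniform

variable {P R ι : Type*} {l : ℝ} {pg : P → ι} {rg : R → ι}

/-- The assignment that spreads a load `l` of each paper uniformly over the reviewers of its own
group, where `pg` and `rg` give the groups of papers and reviewers. A paper whose group has no
reviewer is assigned nothing. -/
def groupUniform (l : ℝ) (pg : P → ι) (rg : R → ι) (p : P) : R → ℝ :=
  {r | rg r = pg p}.indicator fun _ => l / {r | rg r = pg p}.ncard

theorem groupUniform_eq_indicator_papers (l : ℝ) (pg : P → ι) (rg : R → ι) (p : P) (r : R) :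
    groupUniform l pg rg p r =
      {p | pg p = rg r}.indicator (fun _ => l / {s | rg s = rg r}.ncard) p := by
  by_cases h : pg p = rg r
  · simp [groupUniform, h]
  · simp [groupUniform, h, Ne.symm h]

theorem eq_of_groupUniform_ne_zero {p : P} {r : R} (h : groupUniform l pg rg p r ≠ 0) :
    pg p = rg r :=
  (Set.mem_of_indicator_ne_zero h).symm

theorem groupUniform_nonneg (hl : 0 ≤ l) (p : P) (r : R) : 0 ≤ groupUniform l pg rg p r :=
  Set.indicator_nonneg (fun _ _ => by positivity) r

theorem groupUniform_le {Q : ℝ} (hQ : 0 ≤ Q) {p : P}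
    (hl : l ≤ Q * {r | rg r = pg p}.ncard) (r : R) : groupUniform l pg rg p r ≤ Q :=
  Set.indicator_apply_le' (fun _ => div_le_of_le_mul₀ (by positivity) hQ hl) fun _ => hQ

theorem sum_groupUniform_reviewers [Fintype R] {p : P}
    (h : {r | rg r = pg p}.ncard = 0 → l = 0) : ∑ r, groupUniform l pg rg p r = l := by
  rw [groupUniform, sum_indicator_const_eq_ncard_mul]
  exact mul_div_cancel_of_imp' fun h0 => h (Nat.cast_eq_zero.mp h0)

theorem sum_groupUniform_papers [Fintype P] (r : R) :
    ∑ p, groupUniform l pg rg p r =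
      {p | pg p = rg r}.ncard * l / {s | rg s = rg r}.ncard := by
  simp only [groupUniform_eq_indicator_papers, sum_indicator_const_eq_ncard_mul, mul_div_assoc]

theorem feasible_groupUniform {np nr lp lr : ℕ} {Q : ℝ} {pg : Fin np → ι} {rg : Fin nr → ι}
    (hQ : 0 ≤ Q) (hload : ∀ i, {p | pg p = i}.ncard * lp ≤ {r | rg r = i}.ncard * lr)
    (hQr : ∀ i, (lp : ℝ) ≤ Q * {r | rg r = i}.ncard) :
    Feasible np nr lp lr Q (groupUniform lp pg rg) := by
  refine ⟨fun p => sum_groupUniform_reviewers fun h0 => ?_, fun r => ?_, fun p r =>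
    ⟨groupUniform_nonneg lp.cast_nonneg p r, groupUniform_le hQ (hQr _) r⟩⟩
  · have hle := hQr (pg p)
    rw [h0, Nat.cast_zero, mul_zero] at hle
    exact hle.antisymm lp.cast_nonneg
  · rw [sum_groupUniform_papers]
    refine div_le_of_le_mul₀ (by positivity) (by positivity) ?_
    rw [mul_comm (lr : ℝ)]
    exact_mod_cast hload (rg r)

end GroupUniform

theorem stmt3_general {ι : Type*} {np nr lp lr : ℕ} {Q : ℝ} {S : Fin np → Fin nr → ℝ}
    {pg : Fin np → ι} {rg : Fin nr → ι} (a : Fin np → ℝ)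
    (hin : ∀ p r, pg p = rg r → S p r = a p) (hout : ∀ p r, pg p ≠ rg r → S p r < a p)
    (hload : ∀ i, {p | pg p = i}.ncard * lp ≤ {r | rg r = i}.ncard * lr)
    (hQr : ∀ i, (lp : ℝ) ≤ Q * {r | rg r = i}.ncard) :
    ∀ x ∈ PLRA np nr lp lr Q S, ∀ p r, 0 < x p r → pg p = rg r := by
  intro x hx p r hpos
  have hQ : 0 ≤ Q := hpos.le.trans (hx.1.2.2 p r).2
  have hS : ∀ p r, S p r ≤ a p := fun p r =>
    (em (pg p = rg r)).elim (fun h => (hin p r h).le) fun h => (hout p r h).le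
  have heq : S p r = a p := eq_of_mem_PLRA_of_pos hx hS (feasible_groupUniform hQ hload hQr)
    (fun p r h => hin p r (eq_of_groupUniform_ne_zero h)) hpos
  by_contra hne
  exact (hout p r hne).ne heq

/-- every PLRA solution on a blockwise dominant similarity matrix
assigns positive probability only within groups. -/
theorem stmt3 (np nr k lp lr : ℕ) (Q : ℝ) (hQ : Q ∈ Set.Icc (0 : ℝ) 1)
    (S : Fin np → Fin nr → ℝ) (A : Fin k → Fin k → ℝ)
    (pg : Fin np → Fin k) (rg : Fin nr → Fin k)
    (hA0 : ∀ i j, 0 ≤ A i j)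
    (hSA : ∀ p r, S p r = A (pg p) (rg r))
    (hdiag : ∀ i j, i ≠ j → A i j < A i i)
    (hload : ∀ i : Fin k,
      {p : Fin np | pg p = i}.ncard * lp ≤ {r : Fin nr | rg r = i}.ncard * lr)
    (hQr : ∀ i : Fin k, (lp : ℝ) ≤ Q * {r : Fin nr | rg r = i}.ncard) :
    ∀ x ∈ PLRA np nr lp lr Q S, ∀ p r, 0 < x p r → pg p = rg r :=
  stmt3_general (fun p => A (pg p) (pg p)) (fun p r h => by rw [hSA, h])
    (fun p r h => hSA p r ▸ hdiag _ _ h) hload hQr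
end
end

section
/- Let f be a perturbation function, S ∈ ℝ_{≥0}^{n_p×n_r}, w a positive integer, and x ∈ [0,1]^{n_p×n_r}. Define the rounded matrix x′ by x′_{p,r} = ⌊w·x_{p,r}⌋/w for all (p,r). Then PQuality_f(x) − PQuality_f(x′) ≤ f(1/w)·Σ_{p,r} S_{p,r}. In particular, if x maximizes PQuality_f over a set containing x′, the rounded matrix loses at most f(1/w)·Σ_{p,r} S_{p,r} in perturbed quality relative to the optimum. -/
open Finset

noncomputable section

/-!
A concave function `f` with `0 ≤ f 0` satisfies `t * f x ≤ f (t * x)` for `0 ≤ t ≤ 1`, hence is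
subadditive on nonnegative arguments. If `f` is also nondecreasing, then decreasing its argument by
at most `δ` costs at most `f δ`. Rounding down to a multiple of `1 / w` moves each entry by
`fract (w * x) / w ≤ 1 / w`, and the weighted bound follows by summing over the entries.
-/

theorem smul_map_le_map_smul_of_concaveOn {𝕜 E β : Type*} [Ring 𝕜] [PartialOrder 𝕜]
    [IsOrderedRing 𝕜] [AddCommMonoid E] [Module 𝕜 E] [AddCommMonoid β] [PartialOrder β]
    [IsOrderedAddMonoid β] [Module 𝕜 β] [PosSMulMono 𝕜 β]
    {D : Set E} {f : E → β} (hf : ConcaveOn 𝕜 D f) (h0 : 0 ∈ D) (hf0 : 0 ≤ f 0)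
    {x : E} (hx : x ∈ D) {t : 𝕜} (ht0 : 0 ≤ t) (ht1 : t ≤ 1) :
    t • f x ≤ f (t • x) :=
  calc
    t • f x ≤ t • f x + (1 - t) • f 0 :=
      le_add_of_nonneg_right (smul_nonneg (sub_nonneg.2 ht1) hf0)
    _ ≤ f (t • x + (1 - t) • 0) :=
      hf.2 hx h0 ht0 (sub_nonneg.2 ht1) (add_sub_cancel t 1)
    _ = f (t • x) := by rw [smul_zero, add_zero]

section Subadditivity

variable {𝕜 β : Type*} [Field 𝕜] [LinearOrder 𝕜] [IsStrictOrderedRing 𝕜]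
  [AddCommGroup β] [PartialOrder β] [IsOrderedAddMonoid β] [Module 𝕜 β] [PosSMulMono 𝕜 β]
  {D : Set 𝕜} {f : 𝕜 → β}

theorem map_add_le_add_of_concaveOn (hf : ConcaveOn 𝕜 D f) (h0 : 0 ∈ D) (hf0 : 0 ≤ f 0)
    {a b : 𝕜} (ha : 0 ≤ a) (hb : 0 ≤ b) (hab : a + b ∈ D) : f (a + b) ≤ f a + f b := by
  rcases (add_nonneg ha hb).eq_or_lt with hsum | hsum
  · obtain ⟨rfl, rfl⟩ := (add_eq_zero_iff_of_nonneg ha hb).1 hsum.symm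
    simpa only [add_zero] using le_add_of_nonneg_right hf0
  · have chord {c : 𝕜} (hc : 0 ≤ c) (hle : c ≤ a + b) : (c / (a + b)) • f (a + b) ≤ f c := by
      simpa only [smul_eq_mul, div_mul_cancel₀ c hsum.ne'] using
        smul_map_le_map_smul_of_concaveOn hf h0 hf0 hab (div_nonneg hc hsum.le)
          ((div_le_one hsum).2 hle)
    calc
      f (a + b) = (a / (a + b)) • f (a + b) + (b / (a + b)) • f (a + b) := by
        rw [← add_smul, ← add_div, div_self hsum.ne', one_smul]
      _ ≤ f a + f b :=
        add_le_add (chord ha (le_add_of_nonneg_right hb)) (chord hb (le_add_of_nonneg_left ha))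

theorem map_sub_map_le_of_concaveOn_of_monotoneOn (hf : ConcaveOn 𝕜 D f) (hmono : MonotoneOn f D)
    (h0 : 0 ∈ D) (hf0 : 0 ≤ f 0) {x y δ : 𝕜} (hx : x ∈ D) (hy : 0 ≤ y) (hyx : y ≤ x)
    (hδ : δ ∈ D) (hxy : x - y ≤ δ) : f x - f y ≤ f δ := by
  have hsub : 0 ≤ x - y := sub_nonneg.2 hyx
  have hmem : x - y ∈ D := hf.1.ordConnected.out h0 hδ ⟨hsub, hxy⟩
  rw [sub_le_iff_le_add']
  calc
    f x = f (y + (x - y)) := by rw [add_sub_cancel]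
    _ ≤ f y + f (x - y) :=
      map_add_le_add_of_concaveOn hf h0 hf0 hy hsub (by rwa [add_sub_cancel])
    _ ≤ f y + f δ := by gcongr; exact hmono hmem hδ hxy

end Subadditivity

section Rounding

variable {𝕜 : Type*} [Field 𝕜] [LinearOrder 𝕜] [FloorRing 𝕜] {w : 𝕜}

theorem sub_floor_mul_div_eq_fract_div (hw : w ≠ 0) (x : 𝕜) :
    x - (⌊w * x⌋ : 𝕜) / w = Int.fract (w * x) / w := by
  rw [← Int.self_sub_floor, sub_div, mul_div_cancel_left₀ x hw]

variable [IsStrictOrderedRing 𝕜]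

theorem floor_mul_div_nonneg (hw : 0 ≤ w) {x : 𝕜} (hx : 0 ≤ x) : 0 ≤ (⌊w * x⌋ : 𝕜) / w :=
  div_nonneg (Int.cast_nonneg (Int.floor_nonneg.2 (mul_nonneg hw hx))) hw

theorem floor_mul_div_le (hw : 0 < w) (x : 𝕜) : (⌊w * x⌋ : 𝕜) / w ≤ x := by
  rw [← sub_nonneg, sub_floor_mul_div_eq_fract_div hw.ne']
  exact div_nonneg (Int.fract_nonneg _) hw.le

theorem sub_floor_mul_div_le_one_div (hw : 0 < w) (x : 𝕜) : x - (⌊w * x⌋ : 𝕜) / w ≤ 1 / w := by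
  rw [sub_floor_mul_div_eq_fract_div hw.ne']
  exact div_le_div_of_nonneg_right (Int.fract_lt_one _).le hw.le

end Rounding

theorem sum_smul_sub_sum_smul_le {ι R M : Type*} [Semiring R] [PartialOrder R]
    [AddCommGroup M] [PartialOrder M] [IsOrderedAddMonoid M] [Module R M] [PosSMulMono R M]
    {t : Finset ι} {S : ι → R} {u v : ι → M} {c : M} (hS : ∀ i ∈ t, 0 ≤ S i)
    (huv : ∀ i ∈ t, u i - v i ≤ c) :
    ∑ i ∈ t, S i • u i - ∑ i ∈ t, S i • v i ≤ (∑ i ∈ t, S i) • c := by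
  simp only [← sum_sub_distrib, ← smul_sub, sum_smul]
  exact sum_le_sum fun i hi => smul_le_smul_of_nonneg_left (huv i hi) (hS i hi)

theorem stmt5_general {ι 𝕜 β : Type*} [Field 𝕜] [LinearOrder 𝕜] [IsStrictOrderedRing 𝕜]
    [FloorRing 𝕜] [AddCommGroup β] [PartialOrder β] [IsOrderedAddMonoid β] [Module 𝕜 β]
    [PosSMulMono 𝕜 β] {t : Finset ι} {S : ι → 𝕜} (hS : ∀ i ∈ t, 0 ≤ S i)
    {D : Set 𝕜} {f : 𝕜 → β} (hf : ConcaveOn 𝕜 D f) (hmono : MonotoneOn f D)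
    (h0 : 0 ∈ D) (hf0 : 0 ≤ f 0) {w : 𝕜} (hw : 0 < w) (hwD : 1 / w ∈ D) {x x' : ι → 𝕜}
    (hx : ∀ i ∈ t, x i ∈ D) (hx0 : ∀ i ∈ t, 0 ≤ x i)
    (hx' : ∀ i ∈ t, x' i = (⌊w * x i⌋ : 𝕜) / w) :
    ∑ i ∈ t, S i • f (x i) - ∑ i ∈ t, S i • f (x' i) ≤ (∑ i ∈ t, S i) • f (1 / w) := by
  refine sum_smul_sub_sum_smul_le hS fun i hi => ?_
  rw [hx' i hi]
  exact map_sub_map_le_of_concaveOn_of_monotoneOn hf hmono h0 hf0 (hx i hi)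
    (floor_mul_div_nonneg hw.le (hx0 i hi)) (floor_mul_div_le hw (x i)) hwD
    (sub_floor_mul_div_le_one_div hw (x i))

/-- rounding each entry of `x` down to a multiple of `1/w` loses at most
`f(1/w)·Σ_{p,r} S_{p,r}` in perturbed quality. -/
theorem stmt5 (np nr : ℕ) (S : Fin np → Fin nr → ℝ) (hS : ∀ p r, 0 ≤ S p r)
    (f : ℝ → ℝ) (hf : IsPerturbation f) (w : ℕ) (hw : 0 < w)
    (x x' : Fin np → Fin nr → ℝ)
    (hx : ∀ p r, x p r ∈ Set.Icc (0 : ℝ) 1)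
    (hx' : ∀ p r, x' p r = (⌊(w : ℝ) * x p r⌋ : ℝ) / w) :
    PQuality f S x - PQuality f S x' ≤ f (1 / w) * ∑ p, ∑ r, S p r := by
  obtain ⟨hf0, -, hmono, hconc⟩ := hf
  have hwD : 1 / (w : ℝ) ∈ Set.Icc (0 : ℝ) 1 :=
    ⟨by positivity, (div_le_one (Nat.cast_pos.2 hw)).2 (Nat.one_le_cast.2 hw)⟩
  simpa only [PQuality, Fintype.sum_prod_type, smul_eq_mul, mul_comm (f (1 / w))] using
    stmt5_general (ι := Fin np × Fin nr) (t := univ) (fun i _ => hS i.1 i.2) hconc hmono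
      (Set.left_mem_Icc.2 zero_le_one) hf0.ge (Nat.cast_pos.2 hw) hwD
      (fun i _ => hx i.1 i.2) (fun i _ => (hx i.1 i.2).1) (fun i _ => hx' i.1 i.2)
end
end

section
/- Let (n_p, n_r, ℓ_p, ℓ_r, S) be a paper assignment instance, Q ∈ [0,1] such that F(Q) is nonempty, and let RM : ℝ^{n_p×n_r} → ℝ be a concave continuous function. Let Q_OPT = max{Quality(x) : x ∈ F(Q)}, and for τ ∈ [0,1] define RM*(τ) = max{RM(x) : x ∈ F(Q), Quality(x) ≥ τ·Q_OPT}. Then RM* is a concave and non-increasing function on [0,1]. -/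
open Finset

noncomputable section

/-
A convex combination of a point meeting the requirement `c` and a point meeting the requirement `d`
meets the same combination of `c` and `d`. Hence the optimal value of a concave program is a concave
function of the requirement; it is antitone because a stronger requirement leaves fewer points.
`RM*` is this function along the ray `τ ↦ τ * QOPT`, which is increasing since the similarities are
nonnegative, and which for `τ ≤ 1` stays among the requirements that can be met, since a quality
maximizer exists. No optimal point of the program has to be chosen, because
`sup A + sup B = sup (A + B)` for nonempty sets of reals that are bounded above.
-/

section ValueFunction

variable {E β : Type*} {K : Set E} {q : E → β} {f : E → ℝ} {c : β} {x : E}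

/-- The value function of the program maximizing `f x` over `x ∈ K` subject to `c ≤ q x`, as a
function of the requirement `c`. It has the junk value `0` when no point of `K` meets the
requirement, i.e. for `c ∉ lowerClosure (q '' K)`, and when `f` is unbounded above on those that
do. -/
def valueFunction [LE β] (K : Set E) (q : E → β) (f : E → ℝ) (c : β) : ℝ :=
  sSup (f '' {x ∈ K | c ≤ q x})

lemma bddAbove_image_sep_ge [LE β] (hf : BddAbove (f '' K)) (c : β) :
    BddAbove (f '' {x ∈ K | c ≤ q x}) :=
  hf.mono (Set.image_mono fun _ hx ↦ hx.1)

lemma nonempty_image_sep_ge [Preorder β] (f : E → ℝ) (hc : c ∈ lowerClosure (q '' K)) :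
    (f '' {x ∈ K | c ≤ q x}).Nonempty := by
  obtain ⟨_, ⟨x, hx, rfl⟩, hcx⟩ := hc
  exact ⟨f x, x, ⟨hx, hcx⟩, rfl⟩

lemma le_valueFunction [LE β] (hf : BddAbove (f '' K)) (hx : x ∈ K) (hc : c ≤ q x) :
    f x ≤ valueFunction K q f c :=
  le_csSup (bddAbove_image_sep_ge hf c) ⟨x, ⟨hx, hc⟩, rfl⟩

lemma antitoneOn_valueFunction [Preorder β] (hf : BddAbove (f '' K)) :
    AntitoneOn (valueFunction K q f) (lowerClosure (q '' K)) := fun c _ _ hd hcd ↦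
  csSup_le_csSup (bddAbove_image_sep_ge hf c) (nonempty_image_sep_ge f hd)
    (Set.image_mono fun _ hx ↦ ⟨hx.1, hcd.trans hx.2⟩)

variable [AddCommMonoid E] [SMul ℝ E] [AddCommMonoid β] [PartialOrder β] [IsOrderedAddMonoid β]

lemma smul_add_smul_le_of_concaveOn [SMul ℝ β] [PosSMulMono ℝ β] (hq : ConcaveOn ℝ K q)
    {y : E} (hx : x ∈ K) (hy : y ∈ K) {d : β} (hc : c ≤ q x) (hd : d ≤ q y) {a b : ℝ}
    (ha : 0 ≤ a) (hb : 0 ≤ b) (hab : a + b = 1) : a • c + b • d ≤ q (a • x + b • y) :=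
  calc
    a • c + b • d ≤ a • q x + b • q y := by gcongr
    _ ≤ q (a • x + b • y) := hq.2 hx hy ha hb hab

lemma convex_lowerClosure_image [SMul ℝ β] [PosSMulMono ℝ β] (hq : ConcaveOn ℝ K q) :
    Convex ℝ (lowerClosure (q '' K) : Set β) := by
  rintro c ⟨_, ⟨x, hx, rfl⟩, hc⟩ d ⟨_, ⟨y, hy, rfl⟩, hd⟩ a b ha hb hab
  exact ⟨_, ⟨_, hq.1 hx hy ha hb hab, rfl⟩,
    smul_add_smul_le_of_concaveOn hq hx hy hc hd ha hb hab⟩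

open scoped Pointwise in
lemma concaveOn_valueFunction [SMul ℝ β] [PosSMulMono ℝ β] (hf : ConcaveOn ℝ K f)
    (hfK : BddAbove (f '' K)) (hq : ConcaveOn ℝ K q) :
    ConcaveOn ℝ (lowerClosure (q '' K) : Set β) (valueFunction K q f) := by
  refine ⟨convex_lowerClosure_image hq, fun c hc d hd a b ha hb hab ↦ ?_⟩
  have hnec := (nonempty_image_sep_ge f hc).smul_set (a := a)
  have hned := (nonempty_image_sep_ge f hd).smul_set (a := b)
  have hsup : a • valueFunction K q f c + b • valueFunction K q f d =
      sSup (a • f '' {x ∈ K | c ≤ q x} + b • f '' {x ∈ K | d ≤ q x}) := by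
    rw [valueFunction, valueFunction,
      csSup_add hnec ((bddAbove_image_sep_ge hfK c).smul_of_nonneg ha)
        hned ((bddAbove_image_sep_ge hfK d).smul_of_nonneg hb),
      Real.sSup_smul_of_nonneg ha, Real.sSup_smul_of_nonneg hb]
  rw [hsup]
  refine csSup_le (hnec.add hned) ?_
  rintro _ ⟨_, ⟨_, ⟨x, ⟨hx, hcx⟩, rfl⟩, rfl⟩, _, ⟨_, ⟨y, ⟨hy, hdy⟩, rfl⟩, rfl⟩, rfl⟩
  calc
    a • f x + b • f y ≤ f (a • x + b • y) := hf.2 hx hy ha hb hab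
    _ ≤ valueFunction K q f (a • c + b • d) :=
      le_valueFunction hfK (hq.1 hx hy ha hb hab)
        (smul_add_smul_le_of_concaveOn hq hx hy hcx hdy ha hb hab)

theorem stmt8_general [Module ℝ β] [IsOrderedModule ℝ β] (hf : ConcaveOn ℝ K f)
    (hfK : BddAbove (f '' K)) (hq : ConcaveOn ℝ K q) {m : β} (hm : m ∈ lowerClosure (q '' K))
    (hm₀ : 0 ≤ m) :
    AntitoneOn (fun τ : ℝ ↦ sSup (f '' {x ∈ K | τ • m ≤ q x})) (Set.Iic 1) ∧
      ConcaveOn ℝ (Set.Iic 1) (fun τ : ℝ ↦ sSup (f '' {x ∈ K | τ • m ≤ q x})) := by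
  have hray : Set.MapsTo (fun τ : ℝ ↦ τ • m) (Set.Iic 1) (lowerClosure (q '' K)) :=
    fun τ hτ ↦ (lowerClosure (q '' K)).lower (smul_le_of_le_one_left hm₀ hτ) hm
  have hmono : Monotone fun τ : ℝ ↦ τ • m := fun _ _ h ↦ smul_le_smul_of_nonneg_right h hm₀
  exact ⟨(antitoneOn_valueFunction hfK).comp_MonotoneOn (hmono.monotoneOn _) hray,
    ((concaveOn_valueFunction hf hfK hq).comp_linearMap
      (LinearMap.toSpanSingleton ℝ β m)).subset hray (convex_Iic 1)⟩

end ValueFunction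

section Assignment

variable {np nr lp lr : ℕ} {Q : ℝ} (S : Fin np → Fin nr → ℝ)

lemma convex_feasible (np nr lp lr : ℕ) (Q : ℝ) : Convex ℝ {x | Feasible np nr lp lr Q x} := by
  have hpaper (p : Fin np) : IsLinearMap ℝ fun x : Fin np → Fin nr → ℝ ↦ ∑ r, x p r :=
    ⟨fun x y ↦ by simp [sum_add_distrib], fun c x ↦ by simp [mul_sum]⟩
  have hreviewer (r : Fin nr) : IsLinearMap ℝ fun x : Fin np → Fin nr → ℝ ↦ ∑ p, x p r :=
    ⟨fun x y ↦ by simp [sum_add_distrib], fun c x ↦ by simp [mul_sum]⟩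
  have hentry (p : Fin np) (r : Fin nr) : IsLinearMap ℝ fun x : Fin np → Fin nr → ℝ ↦ x p r :=
    ⟨fun _ _ ↦ rfl, fun _ _ ↦ rfl⟩
  simp only [Feasible, Set.ofPred_and, Set.ofPred_forall]
  exact (convex_iInter fun p ↦ convex_hyperplane (hpaper p) _).inter <|
    (convex_iInter fun r ↦ convex_halfSpace_le (hreviewer r) _).inter <|
    convex_iInter₂ fun p r ↦
      (convex_halfSpace_ge (hentry p r) 0).inter (convex_halfSpace_le (hentry p r) Q)

lemma isClosed_feasible (np nr lp lr : ℕ) (Q : ℝ) :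
    IsClosed {x | Feasible np nr lp lr Q x} := by
  simp only [Feasible, Set.ofPred_and, Set.ofPred_forall]
  exact (isClosed_iInter fun p ↦ isClosed_eq (by fun_prop) (by fun_prop)).inter <|
    (isClosed_iInter fun r ↦ isClosed_le (by fun_prop) (by fun_prop)).inter <|
    isClosed_iInter fun p ↦ isClosed_iInter fun r ↦
      (isClosed_le (by fun_prop) (by fun_prop)).inter (isClosed_le (by fun_prop) (by fun_prop))

lemma isCompact_feasible (np nr lp lr : ℕ) (Q : ℝ) :
    IsCompact {x | Feasible np nr lp lr Q x} :=
  (isCompact_Icc (a := 0) (b := fun _ _ ↦ Q)).of_isClosed_subset (isClosed_feasible ..)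
    fun _ hx ↦ ⟨fun p r ↦ (hx.2.2 p r).1, fun p r ↦ (hx.2.2 p r).2⟩

lemma isLinearMap_quality : IsLinearMap ℝ (Quality S) where
  map_add x y := by simp only [Quality, Pi.add_apply, add_mul, sum_add_distrib]
  map_smul c x := by simp only [Quality, Pi.smul_apply, smul_eq_mul, mul_assoc, mul_sum]

lemma concaveOn_quality {K : Set (Fin np → Fin nr → ℝ)} (hK : Convex ℝ K) :
    ConcaveOn ℝ K (Quality S) :=
  ((isLinearMap_quality S).mk' _).concaveOn hK

lemma continuous_quality : Continuous (Quality S) :=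
  ((isLinearMap_quality S).mk' _).continuous_of_finiteDimensional

lemma sSup_quality_mem (hfeas : ∃ x, Feasible np nr lp lr Q x) :
    sSup (Quality S '' {x | Feasible np nr lp lr Q x}) ∈
      Quality S '' {x | Feasible np nr lp lr Q x} :=
  ((isCompact_feasible np nr lp lr Q).image (continuous_quality S)).sSup_mem
    (Set.Nonempty.image _ hfeas)

variable {S}

lemma quality_nonneg (hS : ∀ p r, 0 ≤ S p r) {x : Fin np → Fin nr → ℝ}
    (hx : ∀ p r, 0 ≤ x p r) : 0 ≤ Quality S x :=
  sum_nonneg fun p _ ↦ sum_nonneg fun r _ ↦ mul_nonneg (hx p r) (hS p r)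

lemma sSup_quality_nonneg (hS : ∀ p r, 0 ≤ S p r) :
    0 ≤ sSup (Quality S '' {x | Feasible np nr lp lr Q x}) :=
  Real.sSup_nonneg <| Set.forall_mem_image.2 fun _ hx ↦
    quality_nonneg hS fun p r ↦ (hx.2.2 p r).1

end Assignment

/-- for a concave continuous randomness metric `RM`, the optimal
trade-off curve `RM*(τ)` is concave and non-increasing on `[0,1]`. -/
theorem stmt8 (np nr lp lr : ℕ) (Q : ℝ) (hQ : Q ∈ Set.Icc (0 : ℝ) 1)
    (S : Fin np → Fin nr → ℝ) (hS : ∀ p r, 0 ≤ S p r)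
    (hfeas : ∃ x, Feasible np nr lp lr Q x)
    (RM : (Fin np → Fin nr → ℝ) → ℝ)
    (hRMconc : ConcaveOn ℝ Set.univ RM) (hRMcont : Continuous RM)
    (QOPT : ℝ)
    (hQOPT : QOPT = sSup (Quality S '' {x | Feasible np nr lp lr Q x}))
    (RMstar : ℝ → ℝ)
    (hRMstar : ∀ τ, RMstar τ =
      sSup (RM '' {x | Feasible np nr lp lr Q x ∧ τ * QOPT ≤ Quality S x})) :
    AntitoneOn RMstar (Set.Icc (0 : ℝ) 1) ∧ ConcaveOn ℝ (Set.Icc (0 : ℝ) 1) RMstar := by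
  obtain rfl := funext hRMstar
  subst hQOPT
  have hF := convex_feasible np nr lp lr Q
  have hRMbdd := (isCompact_feasible np nr lp lr Q).bddAbove_image hRMcont.continuousOn
  obtain ⟨hanti, hconc⟩ := stmt8_general (hRMconc.subset (Set.subset_univ _) hF) hRMbdd
    (concaveOn_quality S hF) (subset_lowerClosure (sSup_quality_mem S hfeas))
    (sSup_quality_nonneg hS)
  exact ⟨hanti.mono Set.Icc_subset_Iic_self, hconc.subset Set.Icc_subset_Iic_self (convex_Icc 0 1)⟩
end
end

section
/- Fix reals 0 < v₁ < v₂ < … < v_k, a vector s ∈ ℝ^{n_r} with each entry s_r ∈ {v₁,…,v_k}, Q ∈ (0,1], and ℓ_p with 0 < ℓ_p ≤ Q·n_r. Let f be a strictly concave perturbation function with f′(0) < (v_i/v_{i−1})·f′(1) for all i ∈ {2,…,k}. Then every maximizer z of the per-paper perturbed quality z ↦ Σ_r s_r·f(z_r) over D = {z ∈ [0,Q]^{n_r} : Σ_r z_r = ℓ_p} satisfies the greedy fill-order property: for any reviewers r, r′ with s_r > s_{r′}, if z_{r′} > 0 then z_r = Q. -/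
open Finset

noncomputable section

/-- The row-feasible set `D = {z ∈ [0,Q]^{n_r} : Σ_r z_r = ℓ_p}`. -/
def RowFeasible (nr lp : ℕ) (Q : ℝ) (z : Fin nr → ℝ) : Prop :=
  (∀ r, 0 ≤ z r ∧ z r ≤ Q) ∧ ∑ r, z r = (lp : ℝ)

/-!
If a reviewer `r` more similar than `r'` were below the cap while `r'` has positive probability,
move a small mass `ε` from `r'` to `r`. By concavity `f` changes at least at rate `f' 1` at `r` and
at most at rate `f' 0` at `r'`, so the objective grows by at least `(s r * f' 1 - s r' * f' 0) * ε`.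
This is positive: a gap between two arbitrary levels contains a gap between consecutive ones, where
the ratio condition applies.
-/

section Concave

variable {S : Set ℝ} {f : ℝ → ℝ} {a b x y d : ℝ}

theorem sub_le_mul_sub_of_concaveOn_of_hasDerivWithinAt_left (hf : ConcaveOn ℝ S f)
    (ha : a ∈ S) (hx : x ∈ S) (hy : y ∈ S) (hax : a ≤ x) (hxy : x < y)
    (hd : HasDerivWithinAt f d S a) : f y - f x ≤ d * (y - x) := by
  have hay : a < y := hax.trans_lt hxy
  have slope_le : slope f x y ≤ d :=
    calc slope f x y = slope f y x := slope_comm f x y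
      _ ≤ slope f y a := hf.slope_anti hy ⟨ha, hay.ne⟩ ⟨hx, hxy.ne⟩ hax
      _ = slope f a y := slope_comm f y a
      _ ≤ d := hf.slope_le_of_hasDerivWithinAt ha hy hay hd
  rwa [slope_def_field, div_le_iff₀ (sub_pos.mpr hxy)] at slope_le

theorem mul_sub_le_sub_of_concaveOn_of_hasDerivWithinAt_right (hf : ConcaveOn ℝ S f)
    (hb : b ∈ S) (hx : x ∈ S) (hy : y ∈ S) (hxy : x < y) (hyb : y ≤ b)
    (hd : HasDerivWithinAt f d S b) : d * (y - x) ≤ f y - f x := by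
  have hxb : x < b := hxy.trans_le hyb
  have le_slope : d ≤ slope f x y :=
    calc d ≤ slope f x b := hf.le_slope_of_hasDerivWithinAt hx hb hxb hd
      _ ≤ slope f x y := hf.slope_anti hx ⟨hy, hxy.ne'⟩ ⟨hb, hxb.ne'⟩ hyb
  rwa [slope_def_field, le_div_iff₀ (sub_pos.mpr hxy)] at le_slope

end Concave

theorem mul_lt_mul_of_forall_covBy {κ : Type*} [PartialOrder κ] [SuccOrder κ] {v : κ → ℝ}
    (hvpos : ∀ i, 0 < v i) (hvmono : StrictMono v) {d₀ d₁ : ℝ} (hd : d₁ ≤ d₀)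
    (hratio : ∀ i j, i ⋖ j → d₀ < v j / v i * d₁) {i j : κ} (hij : i < j) :
    v i * d₀ < v j * d₁ := by
  have hcov : i ⋖ Order.succ i := Order.covBy_succ_of_not_isMax hij.not_isMax
  have hstep : v i * d₀ < v (Order.succ i) * d₁ := by
    have h := hratio i _ hcov
    rwa [div_mul_eq_mul_div, lt_div_iff₀' (hvpos i)] at h
  have hd₁ : 0 < d₁ := by
    have hlt : v i * d₁ < v (Order.succ i) * d₁ :=
      (mul_le_mul_of_nonneg_left hd (hvpos i).le).trans_lt hstep
    have hmul : 0 < (v (Order.succ i) - v i) * d₁ := by rwa [sub_mul, sub_pos]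
    exact pos_of_mul_pos_right hmul (sub_nonneg.mpr (hvmono hcov.lt).le)
  have hle : v (Order.succ i) ≤ v j := hvmono.monotone (Order.succ_le_of_lt hij)
  exact hstep.trans_le (mul_le_mul_of_nonneg_right hle hd₁.le)

section Transfer

variable {ι M : Type*} [DecidableEq ι] [AddCommGroup M]

/-- The allocation obtained from `z` by moving the amount `ε` from `r'` to `r`: the exchange step
against which an optimal allocation is tested. For `r = r'` it is `z` itself. -/
def transfer (z : ι → M) (r r' : ι) (ε : M) : ι → M :=
  z + Pi.single r ε - Pi.single r' ε

variable {z : ι → M} {r r' : ι} {ε : M}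

theorem transfer_apply_target (h : r ≠ r') : transfer z r r' ε r = z r + ε := by
  simp [transfer, h]

theorem transfer_apply_source (h : r ≠ r') : transfer z r r' ε r' = z r' - ε := by
  simp [transfer, h.symm]

theorem transfer_apply_of_ne {q : ι} (h : q ≠ r) (h' : q ≠ r') : transfer z r r' ε q = z q := by
  simp [transfer, h, h']

variable [Fintype ι]

theorem sum_transfer : ∑ q, transfer z r r' ε q = ∑ q, z q := by
  simp [transfer, sum_add_distrib]

theorem sum_comp_transfer_sub_sum {N : Type*} [AddCommGroup N] (g : ι → M → N) (h : r ≠ r') :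
    ∑ q, g q (transfer z r r' ε q) - ∑ q, g q (z q) =
      (g r (z r + ε) - g r (z r)) + (g r' (z r' - ε) - g r' (z r')) := by
  rw [← sum_sub_distrib, Fintype.sum_eq_add r r' h fun q hq => by
    rw [transfer_apply_of_ne hq.1 hq.2, sub_self], transfer_apply_target h, transfer_apply_source h]

end Transfer

section CappedSimplex

variable {ι : Type*} [Fintype ι] {s z : ι → ℝ} {r r' : ι} {Q c b d₀ d₁ ε : ℝ} {f : ℝ → ℝ}

/-- The capped simplex `{z ∈ [0,Q]^ι : Σ_r z_r = c}`: the domain `D` of a single paper, for an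
arbitrary finite set of reviewers and an arbitrary real load. `RowFeasible nr lp Q` is membership
in it for `ι = Fin nr` and `c = lp`. -/
def cappedSimplex (ι : Type*) [Fintype ι] (Q c : ℝ) : Set (ι → ℝ) :=
  {z | (∀ r, 0 ≤ z r ∧ z r ≤ Q) ∧ ∑ r, z r = c}

theorem transfer_mem_cappedSimplex [DecidableEq ι] (hz : z ∈ cappedSimplex ι Q c) (hr : r ≠ r')
    (hε : 0 ≤ ε) (hεr : z r + ε ≤ Q) (hεr' : ε ≤ z r') :
    transfer z r r' ε ∈ cappedSimplex ι Q c := by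
  refine ⟨fun q => ?_, sum_transfer.trans hz.2⟩
  rcases eq_or_ne q r with rfl | hqr
  · rw [transfer_apply_target hr]
    exact ⟨add_nonneg (hz.1 q).1 hε, hεr⟩
  rcases eq_or_ne q r' with rfl | hqr'
  · rw [transfer_apply_source hr]
    exact ⟨sub_nonneg.mpr hεr', (sub_le_self _ hε).trans (hz.1 q).2⟩
  · rw [transfer_apply_of_ne hqr hqr']
    exact hz.1 q

theorem sum_mul_lt_sum_mul_transfer [DecidableEq ι] {a : ℝ} (hf : ConcaveOn ℝ (Set.Icc a b) f)
    (hd₀ : HasDerivWithinAt f d₀ (Set.Icc a b) a) (hd₁ : HasDerivWithinAt f d₁ (Set.Icc a b) b)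
    (hsr : 0 ≤ s r) (hsr' : 0 ≤ s r') (hs : s r' * d₀ < s r * d₁) (hr : r ≠ r') (hε : 0 < ε)
    (har : a ≤ z r) (hrb : z r + ε ≤ b) (har' : a ≤ z r' - ε) (hrb' : z r' ≤ b) :
    ∑ q, s q * f (z q) < ∑ q, s q * f (transfer z r r' ε q) := by
  have hlt : z r < z r + ε := lt_add_of_pos_right _ hε
  have hlt' : z r' - ε < z r' := sub_lt_self _ hε
  have hab : a ≤ b := har.trans (hlt.le.trans hrb)
  have gain : d₁ * ε ≤ f (z r + ε) - f (z r) := by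
    simpa only [add_sub_cancel_left] using
      mul_sub_le_sub_of_concaveOn_of_hasDerivWithinAt_right hf (Set.right_mem_Icc.mpr hab)
        ⟨har, hlt.le.trans hrb⟩ ⟨har.trans hlt.le, hrb⟩ hlt hrb hd₁
  have loss : f (z r') - f (z r' - ε) ≤ d₀ * ε := by
    simpa only [sub_sub_cancel] using
      sub_le_mul_sub_of_concaveOn_of_hasDerivWithinAt_left hf (Set.left_mem_Icc.mpr hab)
        ⟨har', hlt'.le.trans hrb'⟩ ⟨har'.trans hlt'.le, hrb'⟩ har' hlt' hd₀
  have loss_lt_gain : s r' * (f (z r') - f (z r' - ε)) < s r * (f (z r + ε) - f (z r)) :=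
    calc s r' * (f (z r') - f (z r' - ε)) ≤ s r' * (d₀ * ε) := by gcongr
      _ = s r' * d₀ * ε := (mul_assoc _ _ _).symm
      _ < s r * d₁ * ε := by gcongr
      _ = s r * (d₁ * ε) := mul_assoc _ _ _
      _ ≤ s r * (f (z r + ε) - f (z r)) := by gcongr
  have change := sum_comp_transfer_sub_sum (z := z) (ε := ε) (fun q t => s q * f t) hr
  linarith

theorem eq_cap_of_isMaxOn_cappedSimplex (hQb : Q ≤ b) (hf : ConcaveOn ℝ (Set.Icc 0 b) f)
    (hd₀ : HasDerivWithinAt f d₀ (Set.Icc 0 b) 0) (hd₁ : HasDerivWithinAt f d₁ (Set.Icc 0 b) b)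
    (hz : z ∈ cappedSimplex ι Q c)
    (hmax : IsMaxOn (fun w : ι → ℝ => ∑ q, s q * f (w q)) (cappedSimplex ι Q c) z)
    (hsr : 0 ≤ s r) (hsr' : 0 ≤ s r') (hr : r ≠ r') (hs : s r' * d₀ < s r * d₁)
    (hzr' : 0 < z r') : z r = Q := by
  classical
  by_contra hne
  have hzr : z r < Q := (hz.1 r).2.lt_of_ne hne
  obtain ⟨ε, hε, hεmin⟩ : ∃ ε, 0 < ε ∧ ε ≤ min (Q - z r) (z r') :=
    ⟨_, lt_min (sub_pos.mpr hzr) hzr', le_rfl⟩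
  have hεr : z r + ε ≤ Q := le_sub_iff_add_le'.mp (hεmin.trans (min_le_left _ _))
  have hεr' : ε ≤ z r' := hεmin.trans (min_le_right _ _)
  have improved : ∑ q, s q * f (z q) < ∑ q, s q * f (transfer z r r' ε q) :=
    sum_mul_lt_sum_mul_transfer hf hd₀ hd₁ hsr hsr' hs hr hε (hz.1 r).1 (hεr.trans hQb)
      (sub_nonneg.mpr hεr') ((hz.1 r').2.trans hQb)
  exact improved.not_ge (hmax (transfer_mem_cappedSimplex hz hr hε.le hεr hεr'))

end CappedSimplex

theorem stmt13_general {ι κ : Type*} [Fintype ι] [LinearOrder κ] [SuccOrder κ] {v : κ → ℝ}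
    (hvpos : ∀ i, 0 < v i) (hvmono : StrictMono v)
    {s : ι → ℝ} (hs : ∀ r, ∃ i, s r = v i) {Q b c : ℝ} (hQb : Q ≤ b)
    {f : ℝ → ℝ} {d₀ d₁ : ℝ} (hf : ConcaveOn ℝ (Set.Icc 0 b) f)
    (hd₀ : HasDerivWithinAt f d₀ (Set.Icc 0 b) 0) (hd₁ : HasDerivWithinAt f d₁ (Set.Icc 0 b) b)
    (hratio : ∀ i j, i ⋖ j → d₀ < v j / v i * d₁)
    {z : ι → ℝ} (hz : z ∈ cappedSimplex ι Q c)
    (hmax : IsMaxOn (fun w : ι → ℝ => ∑ r, s r * f (w r)) (cappedSimplex ι Q c) z)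
    {r r' : ι} (hss : s r' < s r) (hzr' : 0 < z r') : z r = Q := by
  have hs_nonneg : ∀ q, 0 ≤ s q := fun q => by
    obtain ⟨i, hi⟩ := hs q
    exact hi ▸ (hvpos i).le
  have hb : 0 < b := hzr'.trans_le ((hz.1 r').2.trans hQb)
  have hd : d₁ ≤ d₀ :=
    have h0 : (0 : ℝ) ∈ Set.Icc 0 b := Set.left_mem_Icc.mpr hb.le
    have hb' : b ∈ Set.Icc 0 b := Set.right_mem_Icc.mpr hb.le
    (hf.le_slope_of_hasDerivWithinAt h0 hb' hb hd₁).trans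
      (hf.slope_le_of_hasDerivWithinAt h0 hb' hb hd₀)
  have hweights : s r' * d₀ < s r * d₁ := by
    obtain ⟨j, hj⟩ := hs r
    obtain ⟨i, hi⟩ := hs r'
    rw [hi, hj] at hss ⊢
    exact mul_lt_mul_of_forall_covBy hvpos hvmono hd hratio (hvmono.lt_iff_lt.mp hss)
  exact eq_cap_of_isMaxOn_cappedSimplex hQb hf hd₀ hd₁ hz hmax (hs_nonneg r) (hs_nonneg r')
    (ne_of_apply_ne s hss.ne') hweights hzr'

/-- every maximizer of the per-paper perturbed quality over the
row-feasible set satisfies the greedy fill-order property: a less-similar reviewer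
gets positive probability only if every more-similar reviewer is saturated at `Q`. -/
theorem stmt13 (nr k lp : ℕ) (v : Fin k → ℝ)
    (hvpos : ∀ i, 0 < v i) (hvmono : StrictMono v)
    (s : Fin nr → ℝ) (hs : ∀ r, ∃ i, s r = v i)
    (Q : ℝ) (hQ : Q ∈ Set.Ioc (0 : ℝ) 1)
    (hlp0 : 0 < lp) (hlp : (lp : ℝ) ≤ Q * nr)
    (f f' : ℝ → ℝ) (hf : IsPerturbation f)
    (hstrict : StrictConcaveOn ℝ (Set.Icc (0 : ℝ) 1) f)
    (hderiv : ∀ t ∈ Set.Icc (0 : ℝ) 1, HasDerivWithinAt f (f' t) (Set.Icc (0 : ℝ) 1) t)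
    (hf' : ∀ i j : Fin k, (i : ℕ) + 1 = (j : ℕ) → f' 0 < v j / v i * f' 1)
    (z : Fin nr → ℝ)
    (hz : RowFeasible nr lp Q z)
    (hzmax : ∀ w, RowFeasible nr lp Q w →
      ∑ r, s r * f (w r) ≤ ∑ r, s r * f (z r)) :
    ∀ r r', s r' < s r → 0 < z r' → z r = Q :=
  fun _ _ => stmt13_general hvpos hvmono hs hQ.2 hf.2.2.2 (hderiv 0 (by simp)) (hderiv 1 (by simp))
    (fun i j hij => hf' i j (Nat.covBy_iff_add_one_eq.mp (Fin.covBy_iff.mp hij))) hz hzmax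
end
end

section
/- Fix reals 0 < v₁ < v₂ < … < v_k, a vector s ∈ ℝ^{n_r} with each entry s_r ∈ {v₁,…,v_k}, Q ∈ (0,1], and ℓ_p with 0 < ℓ_p ≤ Q·n_r. Let f be a strictly concave perturbation function with f′(0) < (v_i/v_{i−1})·f′(1) for all i ∈ {2,…,k}. Then every maximizer z of the per-paper perturbed quality z ↦ Σ_r s_r·f(z_r) over D = {z ∈ [0,Q]^{n_r} : Σ_r z_r = ℓ_p} assigns equal values to equal similarity levels: s_r = s_{r′} implies z_r = z_{r′}. Consequently, combined with the greedy fill-order property, the maximizer of the per-paper perturbed quality over D is unique. -/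
/-!
On a convex domain, the positively weighted sum `∑ r, s r • f (z r)` is strictly concave in the
whole row `z`, although each summand only sees one coordinate: two distinct rows differ in some
coordinate, and that summand makes the inequality strict. Hence there is at most one maximizer.
Exchanging the values of two reviewers of equal similarity preserves both the domain and the
objective, so the unique maximizer is fixed by the exchange.
-/

open Finset

noncomputable section

section StrictConcave

variable {𝕜 β ι : Type*} [PartialOrder 𝕜] [AddCommMonoid β] [PartialOrder β]

theorem strictConcaveOn_const_smul {E : Type*} [AddCommMonoid E] [CommSemiring 𝕜] [SMul 𝕜 E]
    [Module 𝕜 β] [PosSMulStrictMono 𝕜 β] {K : Set E} {f : E → β} {c : 𝕜} (hc : 0 < c)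
    (hf : StrictConcaveOn 𝕜 K f) : StrictConcaveOn 𝕜 K (fun x ↦ c • f x) :=
  ⟨hf.1, fun x hx y hy hxy a b ha hb hab ↦
    calc a • c • f x + b • c • f y
        = c • (a • f x + b • f y) := by rw [smul_add, smul_comm c, smul_comm c]
      _ < c • f (a • x + b • y) := smul_lt_smul_of_pos_left (hf.2 hx hy hxy ha hb hab) hc⟩

theorem strictConcaveOn_sum_pi [Fintype ι] {E : ι → Type*} [∀ i, AddCommMonoid (E i)]
    [Semiring 𝕜] [∀ i, Module 𝕜 (E i)] [Module 𝕜 β] [IsOrderedCancelAddMonoid β]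
    {K : ∀ i, Set (E i)} {f : ∀ i, E i → β} (hf : ∀ i, StrictConcaveOn 𝕜 (K i) (f i)) :
    StrictConcaveOn 𝕜 (Set.univ.pi K) (fun x ↦ ∑ i, f i (x i)) := by
  refine ⟨convex_pi fun i _ ↦ (hf i).1, fun x hx y hy hxy a b ha hb hab ↦ ?_⟩
  obtain ⟨j, hj⟩ : ∃ j, x j ≠ y j := Function.ne_iff.mp hxy
  calc a • ∑ i, f i (x i) + b • ∑ i, f i (y i)
      = ∑ i, (a • f i (x i) + b • f i (y i)) := by
        rw [smul_sum, smul_sum, ← sum_add_distrib]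
    _ < ∑ i, f i (a • x i + b • y i) :=
        sum_lt_sum
          (fun i _ ↦ (hf i).concaveOn.2 (hx i trivial) (hy i trivial) ha.le hb.le hab)
          ⟨j, mem_univ j, (hf j).2 (hx j trivial) (hy j trivial) hj ha hb hab⟩

end StrictConcave

section Allocation

variable {𝕜 E β ι : Type*} [Fintype ι]

/-- The allocations of a total `c` to the members of `ι`, each receiving a share in `K`.
The row-feasible set `D` of the paper is `allocations (Set.Icc 0 Q) ℓ_p`. -/
def allocations [AddCommMonoid E] (K : Set E) (c : E) : Set (ι → E) :=
  {z | (∀ r, z r ∈ K) ∧ ∑ r, z r = c}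

theorem convex_allocations [Semiring 𝕜] [PartialOrder 𝕜] [AddCommMonoid E] [Module 𝕜 E]
    {K : Set E} (hK : Convex 𝕜 K) (c : E) : Convex 𝕜 (allocations K c : Set (ι → E)) := by
  rintro x ⟨hxK, hxc⟩ y ⟨hyK, hyc⟩ a b ha hb hab
  refine ⟨fun r ↦ hK (hxK r) (hyK r) ha hb hab, ?_⟩
  calc ∑ r, (a • x r + b • y r)
      = a • c + b • c := by rw [sum_add_distrib, ← smul_sum, ← smul_sum, hxc, hyc]
    _ = c := Convex.combo_self hab c

theorem comp_perm_mem_allocations [AddCommMonoid E] {K : Set E} {c : E} {z : ι → E}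
    (hz : z ∈ allocations K c) (σ : Equiv.Perm ι) : z ∘ σ ∈ allocations K c :=
  ⟨fun r ↦ hz.1 (σ r), (Equiv.sum_comp σ z).trans hz.2⟩

/-- The per-paper perturbed quality `∑ r, s r • f (z r)` of the row `z` for the similarities `s`. -/
def rowPQuality [AddCommMonoid β] [SMul 𝕜 β] (f : E → β) (s : ι → 𝕜) (z : ι → E) : β :=
  ∑ r, s r • f (z r)

theorem rowPQuality_comp_perm [AddCommMonoid β] [SMul 𝕜 β] (f : E → β) {s : ι → 𝕜}
    {σ : Equiv.Perm ι} (hσ : s ∘ σ = s) (z : ι → E) :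
    rowPQuality f s (z ∘ σ) = rowPQuality f s z :=
  calc ∑ r, s r • f (z (σ r))
      = ∑ r, s (σ r) • f (z (σ r)) :=
        sum_congr rfl fun r _ ↦ congrArg (· • f (z (σ r))) (congrFun hσ r).symm
    _ = ∑ r, s r • f (z r) := Equiv.sum_comp σ fun r ↦ s r • f (z r)

theorem strictConcaveOn_rowPQuality [CommSemiring 𝕜] [PartialOrder 𝕜] [AddCommMonoid E]
    [Module 𝕜 E] [AddCommMonoid β] [PartialOrder β] [IsOrderedCancelAddMonoid β] [Module 𝕜 β]
    [PosSMulStrictMono 𝕜 β] {K : Set E} {f : E → β} (hf : StrictConcaveOn 𝕜 K f)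
    {s : ι → 𝕜} (hs : ∀ r, 0 < s r) (c : E) :
    StrictConcaveOn 𝕜 (allocations K c) (rowPQuality f s) :=
  (strictConcaveOn_sum_pi fun r ↦ strictConcaveOn_const_smul (hs r) hf).subset
    (fun _ hz r _ ↦ hz.1 r) (convex_allocations hf.1 c)

end Allocation

section Maximizer

variable {𝕜 E β ι : Type*} [Fintype ι] [Field 𝕜] [LinearOrder 𝕜] [IsStrictOrderedRing 𝕜]
  [AddCommMonoid E] [Module 𝕜 E] [AddCommMonoid β] [PartialOrder β] [IsOrderedCancelAddMonoid β]
  [Module 𝕜 β] [PosSMulStrictMono 𝕜 β]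
  {K : Set E} {c : E} {f : E → β} {s : ι → 𝕜} {z : ι → E}

theorem comp_perm_eq_of_isMaxOn_rowPQuality (hf : StrictConcaveOn 𝕜 K f) (hs : ∀ r, 0 < s r)
    (hz : z ∈ allocations K c) (hmax : IsMaxOn (rowPQuality f s) (allocations K c) z)
    {σ : Equiv.Perm ι} (hσ : s ∘ σ = s) : z ∘ σ = z := by
  have hmax_comp : IsMaxOn (rowPQuality f s) (allocations K c) (z ∘ σ) := fun w hw ↦
    (hmax hw).trans_eq (rowPQuality_comp_perm f hσ z).symm
  exact (strictConcaveOn_rowPQuality hf hs c).eq_of_isMaxOn hmax_comp hmax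
    (comp_perm_mem_allocations hz σ) hz

theorem apply_eq_of_isMaxOn_rowPQuality (hf : StrictConcaveOn 𝕜 K f) (hs : ∀ r, 0 < s r)
    (hz : z ∈ allocations K c) (hmax : IsMaxOn (rowPQuality f s) (allocations K c) z)
    {r r' : ι} (hrr' : s r = s r') : z r = z r' := by
  classical
  have hswap : s ∘ Equiv.swap r r' = s := funext (Equiv.apply_swap_eq_self hrr')
  calc z r = (z ∘ Equiv.swap r r') r' := by rw [Function.comp_apply, Equiv.swap_apply_right]
    _ = z r' := congrFun (comp_perm_eq_of_isMaxOn_rowPQuality hf hs hz hmax hswap) r'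

theorem stmt14_general (hf : StrictConcaveOn 𝕜 K f) (hs : ∀ r, 0 < s r)
    (hz : z ∈ allocations K c) (hmax : IsMaxOn (rowPQuality f s) (allocations K c) z) :
    (∀ r r', s r = s r' → z r = z r') ∧
    ∀ z' ∈ allocations K c, IsMaxOn (rowPQuality f s) (allocations K c) z' → z' = z :=
  ⟨fun _ _ ↦ apply_eq_of_isMaxOn_rowPQuality hf hs hz hmax, fun _ hz' hmax' ↦
    (strictConcaveOn_rowPQuality hf hs c).eq_of_isMaxOn hmax' hmax hz' hz⟩

end Maximizer

/-- every maximizer of the per-paper perturbed quality over the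
row-feasible set assigns equal values to reviewers with equal similarity, and
(consequently) the maximizer is unique. -/
theorem stmt14 (nr k lp : ℕ) (v : Fin k → ℝ)
    (hvpos : ∀ i, 0 < v i) (hvmono : StrictMono v)
    (s : Fin nr → ℝ) (hs : ∀ r, ∃ i, s r = v i)
    (Q : ℝ) (hQ : Q ∈ Set.Ioc (0 : ℝ) 1)
    (hlp0 : 0 < lp) (hlp : (lp : ℝ) ≤ Q * nr)
    (f f' : ℝ → ℝ) (hf : IsPerturbation f)
    (hstrict : StrictConcaveOn ℝ (Set.Icc (0 : ℝ) 1) f)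
    (hderiv : ∀ t ∈ Set.Icc (0 : ℝ) 1, HasDerivWithinAt f (f' t) (Set.Icc (0 : ℝ) 1) t)
    (hf' : ∀ i j : Fin k, (i : ℕ) + 1 = (j : ℕ) → f' 0 < v j / v i * f' 1)
    (z : Fin nr → ℝ)
    (hz : RowFeasible nr lp Q z)
    (hzmax : ∀ w, RowFeasible nr lp Q w →
      ∑ r, s r * f (w r) ≤ ∑ r, s r * f (z r)) :
    (∀ r r', s r = s r' → z r = z r') ∧
    ∀ z', RowFeasible nr lp Q z' →
      (∀ w, RowFeasible nr lp Q w → ∑ r, s r * f (w r) ≤ ∑ r, s r * f (z' r)) →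
      z' = z := by
  exact stmt14_general (hstrict.subset (Set.Icc_subset_Icc_right hQ.2) (convex_Icc 0 Q))
    (fun r ↦ (hs r).elim fun i hi ↦ hi ▸ hvpos i) hz hzmax
end
end
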